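/- arXiv:2111.15371 — 3 statements merged into one kernel-verified Lean document; each statement's English description precedes it below -/
import Mathlib

section
/- Let x, y ∈ M(m,k;ℝ) be matrices whose k columns each sum to zero, with Frobenius norm ‖x‖ = ‖y‖ = 1, such that y xᵀ is symmetric and φ := arccos⟨x,y⟩ ∈ (0,π). Then for every t ∈ [0,1]: (i) the columns of Φ(x,y,t) sum to zero; (ii) for all s, t ∈ [0,1] the matrix Φ(x,y,t) Φ(x,y,s)ᵀ is symmetric; and (iii) the derivative Φ′(x,y,t) = d/dt Φ(x,y,t) satisfies ⟨Φ(x,y,t), Φ′(x,y,t)⟩ = 0 and Φ′(x,y,t) Φ(x,y,t)ᵀ is symmetric, i.e. Φ(x,y,·) is a horizontal curve in the pre-shape sphere. -/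
/-!
With `φ = arccos ⟨x, y⟩` and `w = (y - cos φ • x) / sin φ`, the pair `(x, w)` is orthonormal and
`Φ(x, y, t) = cos (tφ) • x + sin (tφ) • w`, so slerp runs along a great circle at speed `φ`.
Its velocity at angle `θ` is `φ` times the point of the same circle at angle `θ + π / 2`: it is
therefore orthogonal to the position, and, like the position, it lies in the span of `x` and `y`.
On that span, being centered is a linear condition and symmetry of `u vᵀ` is a bilinear one, so
both need only be checked on `x` and `y`.
-/

open Real Matrix

noncomputable section

attribute [local instance] Matrix.frobeniusNormedAddCommGroup Matrix.frobeniusNormedSpace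

/-- Frobenius inner product `⟨x,y⟩ = tr(x yᵀ)` on real `m × k` matrices. -/
def fip {m k : ℕ} (x y : Matrix (Fin m) (Fin k) ℝ) : ℝ := Matrix.trace (x * yᵀ)

/-- The columns of `x` sum to the zero vector (centered landmark configuration). -/
def centered {m k : ℕ} (x : Matrix (Fin m) (Fin k) ℝ) : Prop :=
  ∀ i : Fin m, ∑ j : Fin k, x i j = 0

/-- Spherical linear interpolation (slerp) of matrices with respect to the Frobenius
inner product: `Φ(x,y,t) = (sin((1−t)φ)/sin φ) x + (sin(tφ)/sin φ) y`, `φ = arccos⟨x,y⟩`. -/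
def mSlerp {m k : ℕ} (x y : Matrix (Fin m) (Fin k) ℝ) (t : ℝ) : Matrix (Fin m) (Fin k) ℝ :=
  (Real.sin ((1 - t) * Real.arccos (fip x y)) / Real.sin (Real.arccos (fip x y))) • x +
    (Real.sin (t * Real.arccos (fip x y)) / Real.sin (Real.arccos (fip x y))) • y

section GreatCircle

variable {E : Type*}

section Module

variable [AddCommGroup E] [Module ℝ E]

/-- The point at angle `θ` of the circle through `x` in the direction `w`. It is a great circle of
the unit sphere when `x` and `w` are orthonormal, which is not part of the definition. -/
def greatCircle (x w : E) (θ : ℝ) : E := cos θ • x + sin θ • w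

/-- The unit tangent vector at `x` pointing towards `y`, for unit vectors `x` and `y` at angle `φ`.
The angle is an explicit argument so that no inner product on `E` is needed; where `sin φ = 0` the
value is `0`. -/
def unitTangent (φ : ℝ) (x y : E) : E := (sin φ)⁻¹ • (y - cos φ • x)

theorem greatCircle_mem {p : Submodule ℝ E} {x w : E} (hx : x ∈ p) (hw : w ∈ p) (θ : ℝ) :
    greatCircle x w θ ∈ p :=
  p.add_mem (p.smul_mem _ hx) (p.smul_mem _ hw)

theorem unitTangent_mem {p : Submodule ℝ E} {x y : E} (hx : x ∈ p) (hy : y ∈ p) (φ : ℝ) :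
    unitTangent φ x y ∈ p :=
  p.smul_mem _ (p.sub_mem hy (p.smul_mem _ hx))

theorem greatCircle_unitTangent {φ : ℝ} (hφ : sin φ ≠ 0) (x y : E) (t : ℝ) :
    greatCircle x (unitTangent φ x y) (t * φ) =
      (sin ((1 - t) * φ) / sin φ) • x + (sin (t * φ) / sin φ) • y := by
  have coeff : sin ((1 - t) * φ) / sin φ = cos (t * φ) - sin (t * φ) * (sin φ)⁻¹ * cos φ := by
    rw [sub_mul, one_mul, sin_sub]
    field_simp
  rw [coeff, greatCircle, unitTangent]
  module

variable {B : LinearMap.BilinForm ℝ E} {x y w : E} {φ : ℝ}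

theorem apply_unitTangent_eq_zero (hxx : B x x = 1) (hxy : B x y = cos φ) :
    B x (unitTangent φ x y) = 0 := by
  simp [unitTangent, hxx, hxy]

theorem apply_unitTangent_self_eq_one (hB : B.IsSymm) (hφ : sin φ ≠ 0) (hxx : B x x = 1)
    (hyy : B y y = 1) (hxy : B x y = cos φ) :
    B (unitTangent φ x y) (unitTangent φ x y) = 1 := by
  have hyx : B y x = cos φ := by rw [hB.eq, hxy]
  have hsq : B (y - cos φ • x) (y - cos φ • x) = sin φ ^ 2 := by
    simp only [map_sub, map_smul, LinearMap.sub_apply, LinearMap.smul_apply, smul_eq_mul, hxx, hyy,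
      hxy, hyx, sin_sq]
    ring
  simp only [unitTangent, map_smul, LinearMap.smul_apply, smul_eq_mul, hsq]
  field_simp

theorem apply_greatCircle_greatCircle (hB : B.IsSymm) (hxx : B x x = 1) (hww : B w w = 1)
    (hxw : B x w = 0) (θ η : ℝ) :
    B (greatCircle x w θ) (greatCircle x w η) = cos (θ - η) := by
  have hwx : B w x = 0 := by rw [hB.eq, hxw]
  simp only [greatCircle, map_add, map_smul, LinearMap.add_apply, LinearMap.smul_apply,
    smul_eq_mul, hxx, hww, hxw, hwx, cos_sub]
  ring

end Module

theorem hasDerivAt_greatCircle [NormedAddCommGroup E] [NormedSpace ℝ E] (x w : E) (θ : ℝ) :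
    HasDerivAt (greatCircle x w) (greatCircle x w (θ + π / 2)) θ := by
  rw [greatCircle, cos_add_pi_div_two, sin_add_pi_div_two]
  exact ((hasDerivAt_cos θ).smul_const x).add ((hasDerivAt_sin θ).smul_const w)

end GreatCircle

section Symmetry

variable {R m n : Type*} [CommSemiring R] [Fintype n]

theorem isSymm_mul_transpose_of_mem_span {S : Set (Matrix m n R)}
    (hS : ∀ u ∈ S, ∀ v ∈ S, (u * vᵀ).IsSymm) {u v : Matrix m n R}
    (hu : u ∈ Submodule.span R S) (hv : v ∈ Submodule.span R S) : (u * vᵀ).IsSymm := by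
  induction hu, hv using Submodule.span_induction₂ with
  | mem_mem u v hu hv => exact hS u hu v hv
  | zero_left v _ => simp
  | zero_right u _ => simp
  | add_left u₁ u₂ v _ _ _ h₁ h₂ => simpa only [Matrix.add_mul] using h₁.add h₂
  | add_right u v₁ v₂ _ _ _ h₁ h₂ =>
    simpa only [Matrix.transpose_add, Matrix.mul_add] using h₁.add h₂
  | smul_left c u v _ _ h => simpa only [Matrix.smul_mul] using h.smul c
  | smul_right c u v _ _ h =>
    simpa only [Matrix.transpose_smul, Matrix.mul_smul] using h.smul c

theorem isSymm_mul_transpose_of_mem_span_pair {x y : Matrix m n R} (h : (y * xᵀ).IsSymm)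
    {u v : Matrix m n R} (hu : u ∈ Submodule.span R {x, y}) (hv : v ∈ Submodule.span R {x, y}) :
    (u * vᵀ).IsSymm := by
  have self (z : Matrix m n R) : (z * zᵀ).IsSymm := by
    rw [Matrix.IsSymm, Matrix.transpose_mul, Matrix.transpose_transpose]
  have swap : (x * yᵀ).IsSymm := by
    simpa only [Matrix.transpose_mul, Matrix.transpose_transpose] using h.transpose
  refine isSymm_mul_transpose_of_mem_span ?_ hu hv
  rintro u (rfl | rfl) v (rfl | rfl)
  exacts [self _, swap, h, self _]

end Symmetry

section Frobenius

variable {m k : ℕ}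

/-- The subspace of centered configurations, which makes available that linear combinations of
centered configurations are centered. -/
def centeredSubmodule (m k : ℕ) : Submodule ℝ (Matrix (Fin m) (Fin k) ℝ) where
  carrier := {x | centered x}
  zero_mem' i := by simp
  add_mem' hx hy i := by simp [Finset.sum_add_distrib, hx i, hy i]
  smul_mem' c x hx i := by simp [← Finset.mul_sum, hx i]

/-- The Frobenius inner product `fip` as a bilinear form, for use with the results on great
circles. -/
def fipForm (m k : ℕ) : LinearMap.BilinForm ℝ (Matrix (Fin m) (Fin k) ℝ) :=
  LinearMap.mk₂ ℝ fip
    (by simp [fip, Matrix.add_mul]) (by simp [fip])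
    (by simp [fip, Matrix.mul_add]) (by simp [fip])

theorem fipForm_apply (x y : Matrix (Fin m) (Fin k) ℝ) : fipForm m k x y = fip x y := rfl

theorem fipForm_isSymm : (fipForm m k).IsSymm where
  eq x y := by
    rw [fipForm_apply, fipForm_apply, fip, fip, ← Matrix.trace_transpose, Matrix.transpose_mul,
      Matrix.transpose_transpose]

theorem fip_self (x : Matrix (Fin m) (Fin k) ℝ) : fip x x = ‖x‖ ^ 2 := by
  have hnn : 0 ≤ ∑ i, ∑ j, ‖x i j‖ ^ (2 : ℝ) := by positivity
  rw [Matrix.frobenius_norm_def, ← Real.sqrt_eq_rpow, Real.sq_sqrt hnn]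
  simp [fip, Matrix.trace, Matrix.mul_apply, pow_two]

theorem mSlerp_eq_greatCircle {x y : Matrix (Fin m) (Fin k) ℝ}
    (hφ : sin (arccos (fip x y)) ≠ 0) (t : ℝ) :
    mSlerp x y t =
      greatCircle x (unitTangent (arccos (fip x y)) x y) (t * arccos (fip x y)) :=
  (greatCircle_unitTangent hφ x y t).symm

theorem mSlerp_mem {p : Submodule ℝ (Matrix (Fin m) (Fin k) ℝ)}
    {x y : Matrix (Fin m) (Fin k) ℝ} (hx : x ∈ p) (hy : y ∈ p) (t : ℝ) : mSlerp x y t ∈ p :=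
  p.add_mem (p.smul_mem _ hx) (p.smul_mem _ hy)

/-- The velocity of slerp at time `t`: the constant speed `φ = arccos ⟨x, y⟩` times the point of
the great circle a quarter turn ahead of the position. -/
def mSlerpVelocity (x y : Matrix (Fin m) (Fin k) ℝ) (t : ℝ) : Matrix (Fin m) (Fin k) ℝ :=
  arccos (fip x y) •
    greatCircle x (unitTangent (arccos (fip x y)) x y) (t * arccos (fip x y) + π / 2)

theorem mSlerpVelocity_mem {p : Submodule ℝ (Matrix (Fin m) (Fin k) ℝ)}
    {x y : Matrix (Fin m) (Fin k) ℝ} (hx : x ∈ p) (hy : y ∈ p) (t : ℝ) :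
    mSlerpVelocity x y t ∈ p :=
  p.smul_mem _ (greatCircle_mem hx (unitTangent_mem hx hy _) _)

theorem hasDerivAt_mSlerp {x y : Matrix (Fin m) (Fin k) ℝ}
    (hφ : sin (arccos (fip x y)) ≠ 0) (t : ℝ) :
    HasDerivAt (mSlerp x y) (mSlerpVelocity x y t) t := by
  rw [funext (mSlerp_eq_greatCircle hφ)]
  exact (hasDerivAt_greatCircle x _ _).scomp t (hasDerivAt_mul_const _)

theorem fip_mSlerp_mSlerpVelocity_eq_zero {x y : Matrix (Fin m) (Fin k) ℝ}
    (hx : ‖x‖ = 1) (hy : ‖y‖ = 1)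
    (hφ0 : 0 < arccos (fip x y)) (hφπ : arccos (fip x y) < π) (t : ℝ) :
    fip (mSlerp x y t) (mSlerpVelocity x y t) = 0 := by
  have hsin : sin (arccos (fip x y)) ≠ 0 := (sin_pos_of_pos_of_lt_pi hφ0 hφπ).ne'
  have hxx : fipForm m k x x = 1 := by rw [fipForm_apply, fip_self, hx, one_pow]
  have hyy : fipForm m k y y = 1 := by rw [fipForm_apply, fip_self, hy, one_pow]
  have hxy : fipForm m k x y = cos (arccos (fip x y)) :=
    (cos_arccos (arccos_lt_pi.mp hφπ).le (arccos_pos.mp hφ0).le).symm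
  rw [mSlerp_eq_greatCircle hsin, mSlerpVelocity, ← fipForm_apply, map_smul,
    apply_greatCircle_greatCircle fipForm_isSymm hxx
      (apply_unitTangent_self_eq_one fipForm_isSymm hsin hxx hyy hxy)
      (apply_unitTangent_eq_zero hxx hxy),
    sub_add_cancel_left, cos_neg, cos_pi_div_two, smul_zero]

end Frobenius

theorem stmt1_general {m k : ℕ} (x y : Matrix (Fin m) (Fin k) ℝ)
    (hxc : centered x) (hyc : centered y)
    (hx : ‖x‖ = 1) (hy : ‖y‖ = 1)
    (hsym : (y * xᵀ).IsSymm)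
    (hφ0 : 0 < arccos (fip x y)) (hφπ : arccos (fip x y) < π) :
    (∀ t : ℝ, centered (mSlerp x y t)) ∧
      (∀ s t : ℝ, (mSlerp x y t * (mSlerp x y s)ᵀ).IsSymm) ∧
      (∃ Φ' : ℝ → Matrix (Fin m) (Fin k) ℝ,
        (∀ t : ℝ, HasDerivAt (mSlerp x y) (Φ' t) t) ∧
        (∀ t : ℝ, fip (mSlerp x y t) (Φ' t) = 0 ∧ (Φ' t * (mSlerp x y t)ᵀ).IsSymm)) := by
  have hxS : x ∈ Submodule.span ℝ {x, y} := Submodule.mem_span_of_mem (Set.mem_insert x {y})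
  have hyS : y ∈ Submodule.span ℝ {x, y} := Submodule.mem_span_of_mem (Set.mem_insert_of_mem x rfl)
  have hsin : sin (arccos (fip x y)) ≠ 0 := (sin_pos_of_pos_of_lt_pi hφ0 hφπ).ne'
  refine ⟨mSlerp_mem (p := centeredSubmodule m k) hxc hyc, fun s t ↦ ?_, mSlerpVelocity x y,
    hasDerivAt_mSlerp hsin, fun t ↦ ⟨fip_mSlerp_mSlerpVelocity_eq_zero hx hy hφ0 hφπ t, ?_⟩⟩
  · exact isSymm_mul_transpose_of_mem_span_pair hsym (mSlerp_mem hxS hyS t) (mSlerp_mem hxS hyS s)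
  · exact isSymm_mul_transpose_of_mem_span_pair hsym (mSlerpVelocity_mem hxS hyS t)
      (mSlerp_mem hxS hyS t)

theorem stmt1 {m k : ℕ} (x y : Matrix (Fin m) (Fin k) ℝ)
    (hxc : centered x) (hyc : centered y)
    (hx : ‖x‖ = 1) (hy : ‖y‖ = 1)
    (hsym : (y * xᵀ).IsSymm)
    (hφ0 : 0 < Real.arccos (fip x y)) (hφπ : Real.arccos (fip x y) < Real.pi) :
    (∀ t ∈ Set.Icc (0 : ℝ) 1, centered (mSlerp x y t)) ∧
      (∀ s ∈ Set.Icc (0 : ℝ) 1, ∀ t ∈ Set.Icc (0 : ℝ) 1,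
        (mSlerp x y t * (mSlerp x y s)ᵀ).IsSymm) ∧
      (∃ Φ' : ℝ → Matrix (Fin m) (Fin k) ℝ,
        (∀ t : ℝ, HasDerivAt (fun τ => mSlerp x y τ) (Φ' t) t) ∧
        (∀ t ∈ Set.Icc (0 : ℝ) 1,
          fip (mSlerp x y t) (Φ' t) = 0 ∧ (Φ' t * (mSlerp x y t)ᵀ).IsSymm)) := by
  obtain ⟨hcent, hsymm, Φ', hderiv, hhor⟩ := stmt1_general x y hxc hyc hx hy hsym hφ0 hφπ
  exact ⟨fun t _ ↦ hcent t, fun s _ t _ ↦ hsymm s t, Φ', hderiv, fun t _ ↦ hhor t⟩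

end
end

section
/- For every A ∈ M(m,m;ℝ) there exists R ∈ SO(m) maximizing the function Q ↦ tr(QA) over SO(m), and for every such maximizer R the matrix RA is symmetric. Consequently, for any two pre-shapes x, y there exists R ∈ SO(m) such that (Ry) xᵀ is symmetric and arccos⟨x, Ry⟩ = min over Q ∈ SO(m) of arccos⟨x, Qy⟩, i.e. x and Ry are well positioned. -/
open Real Matrix

noncomputable section

/-- The special orthogonal group `SO(m)` as a set of `m × m` real matrices. -/
def SOset (m : ℕ) : Set (Matrix (Fin m) (Fin m) ℝ) := {R | Rᵀ * R = 1 ∧ R.det = 1}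

/-- The pre-shape space: centered configurations of unit Frobenius norm. -/
def isPreShape {m k : ℕ} (x : Matrix (Fin m) (Fin k) ℝ) : Prop :=
  (∀ i : Fin m, ∑ j : Fin k, x i j = 0) ∧ Real.sqrt (fip x x) = 1

/-!
`SO(n)` is compact, so `Q ↦ tr (Q A)` attains its maximum on it. At a local extremum `R`, the
function `t ↦ tr (exp (t S) R A)` has a local extremum at `0` for every skew-symmetric `S`, hence
`tr (S (R A)) = 0`; choosing `S = Eᵢⱼ - Eⱼᵢ` shows that `R A` is symmetric. For two configurations
`x`, `y` one has `⟨x, Q y⟩ = tr (Q (y xᵀ))`, so this applies with `A = y xᵀ`.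
-/

section Trace

variable {n k α : Type*} [Fintype n]

theorem trace_mul_transpose_mul [Fintype k] [CommSemiring α] (x y : Matrix n k α)
    (Q : Matrix n n α) : (x * (Q * y)ᵀ).trace = (Q * (y * xᵀ)).trace := by
  rw [← trace_transpose, transpose_mul, transpose_transpose, Matrix.mul_assoc]

theorem isSymm_of_forall_trace_skew_mul_eq_zero [Ring α] {B : Matrix n n α}
    (h : ∀ S : Matrix n n α, Sᵀ = -S → (S * B).trace = 0) : B.IsSymm := by
  classical
  refine IsSymm.ext fun i j => ?_
  have hskew : (single i j 1 - single j i 1 : Matrix n n α)ᵀ = -(single i j 1 - single j i 1) := by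
    rw [transpose_sub, transpose_single, transpose_single, neg_sub]
  have htrace : B j i - B i j = 0 := by
    simpa only [Matrix.sub_mul, trace_sub, trace_single_mul, one_smul] using h _ hskew
  exact sub_eq_zero.1 htrace

end Trace

section Compact

theorem isCompact_unitaryGroup (n 𝕜 : Type*) [Fintype n] [DecidableEq n] [RCLike 𝕜] :
    IsCompact (unitaryGroup n 𝕜 : Set (Matrix n n 𝕜)) := by
  have hbox : IsCompact (Set.univ.pi fun _ : n => Set.univ.pi fun _ : n =>
      Metric.closedBall (0 : 𝕜) 1) :=
    isCompact_univ_pi fun _ => isCompact_univ_pi fun _ => isCompact_closedBall 0 1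
  refine hbox.of_isClosed_subset (isClosed_unitary (R := Matrix n n 𝕜)) fun U hU i _ j _ => ?_
  exact mem_closedBall_zero_iff.2 (entry_norm_bound_of_unitary hU i j)

theorem isCompact_specialUnitaryGroup (n 𝕜 : Type*) [Fintype n] [DecidableEq n] [RCLike 𝕜] :
    IsCompact (specialUnitaryGroup n 𝕜 : Set (Matrix n n 𝕜)) :=
  (isCompact_unitaryGroup n 𝕜).inter_right <|
    isClosed_eq (f := det) (by fun_prop) continuous_const

end Compact

section SkewExp

open NormedSpace

variable {n 𝔸 : Type*} [Fintype n] [DecidableEq n] [NormedCommRing 𝔸] [NormedAlgebra ℚ 𝔸]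
  [CompleteSpace 𝔸] {S : Matrix n n 𝔸}

theorem transpose_exp_mul_exp_of_transpose_eq_neg (hS : Sᵀ = -S) : (exp S)ᵀ * exp S = 1 := by
  rw [← exp_transpose, hS, ← exp_add_of_commute _ _ (Commute.refl S).neg_left, neg_add_cancel,
    NormedSpace.exp_zero]

theorem det_exp_of_transpose_eq_neg (hS : Sᵀ = -S) : (exp S).det = 1 := by
  have hhalf : ((1 / 2 : ℚ) • S)ᵀ = -((1 / 2 : ℚ) • S) := by
    rw [transpose_smul, hS, smul_neg]
  have hsq : exp S = exp ((1 / 2 : ℚ) • S) * exp ((1 / 2 : ℚ) • S) := by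
    rw [← exp_add_of_commute _ _ (Commute.refl _), ← add_smul, add_halves, one_smul]
  calc (exp S).det = ((exp ((1 / 2 : ℚ) • S))ᵀ * exp ((1 / 2 : ℚ) • S)).det := by
        rw [hsq, det_mul, det_mul, det_transpose]
    _ = 1 := by rw [transpose_exp_mul_exp_of_transpose_eq_neg hhalf, det_one]

theorem exp_mem_specialOrthogonalGroup (hS : Sᵀ = -S) : exp S ∈ specialOrthogonalGroup n 𝔸 :=
  mem_specialOrthogonalGroup_iff.2
    ⟨(mem_orthogonalGroup_iff' n 𝔸).2 (transpose_exp_mul_exp_of_transpose_eq_neg hS),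
      det_exp_of_transpose_eq_neg hS⟩

end SkewExp

section TraceExtremum

open NormedSpace Filter Topology

variable {n : Type*} [Fintype n] [DecidableEq n]

-- The operator norm only gives access to the Banach algebra lemmas on `exp`; the derivative and
-- the continuity below are stated for the entrywise topology.
open scoped Matrix.Norms.Operator in
theorem hasDerivAt_trace_exp_smul_mul {𝕜 : Type*} [RCLike 𝕜] (S B : Matrix n n 𝕜) :
    HasDerivAt (fun t : 𝕜 => (exp (t • S) * B).trace) (S * B).trace 0 := by
  have hexp : HasDerivAt (fun t : 𝕜 => exp (t • S)) S 0 := by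
    have h := hasDerivAt_exp_smul_const S (0 : 𝕜)
    rwa [zero_smul, NormedSpace.exp_zero, one_mul] at h
  let L : Matrix n n 𝕜 →L[𝕜] 𝕜 :=
    LinearMap.toContinuousLinearMap (traceLinearMap n 𝕜 𝕜 ∘ₗ LinearMap.mulRight 𝕜 B)
  exact L.hasFDerivAt.comp_hasDerivAt (0 : 𝕜) hexp

open scoped Matrix.Norms.Operator in
theorem continuous_matrix_exp (n 𝕜 : Type*) [Fintype n] [DecidableEq n] [RCLike 𝕜] :
    Continuous (exp : Matrix n n 𝕜 → Matrix n n 𝕜) :=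
  exp_continuous

theorem exists_isMaxOn_trace_mul (A : Matrix n n ℝ) :
    ∃ R ∈ specialOrthogonalGroup n ℝ,
      IsMaxOn (fun Q => (Q * A).trace) (specialOrthogonalGroup n ℝ : Set (Matrix n n ℝ)) R :=
  -- `star` is trivial on `ℝ`, so `specialOrthogonalGroup n ℝ` unfolds to `specialUnitaryGroup n ℝ`.
  (isCompact_specialUnitaryGroup n ℝ).exists_isMaxOn ⟨1, one_mem _⟩ (by fun_prop)

theorem tendsto_exp_smul_mul_nhdsWithin_specialOrthogonalGroup {S R : Matrix n n ℝ}
    (hS : Sᵀ = -S) (hR : R ∈ specialOrthogonalGroup n ℝ) :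
    Tendsto (fun t : ℝ => exp (t • S) * R) (𝓝 0) (𝓝[specialOrthogonalGroup n ℝ] R) := by
  have hcont : Continuous fun t : ℝ => exp (t • S) * R :=
    ((continuous_matrix_exp n ℝ).comp (by fun_prop : Continuous fun t : ℝ => t • S)).mul
      continuous_const
  refine tendsto_nhdsWithin_iff.2 ⟨hcont.tendsto' 0 R ?_, ?_⟩
  · rw [zero_smul, NormedSpace.exp_zero, one_mul]
  · refine Eventually.of_forall fun t => mul_mem (exp_mem_specialOrthogonalGroup ?_) hR
    rw [transpose_smul, hS, smul_neg]

theorem isSymm_mul_of_isLocalExtrOn_trace_mul {A R : Matrix n n ℝ}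
    (hR : R ∈ specialOrthogonalGroup n ℝ)
    (h : IsLocalExtrOn (fun Q => (Q * A).trace) (specialOrthogonalGroup n ℝ) R) :
    (R * A).IsSymm := by
  refine isSymm_of_forall_trace_skew_mul_eq_zero fun S hS => ?_
  have hcurve : exp ((0 : ℝ) • S) * R = R := by rw [zero_smul, NormedSpace.exp_zero, one_mul]
  have hextr : IsLocalExtr ((fun Q => (Q * A).trace) ∘ fun t : ℝ => exp (t • S) * R) 0 := by
    refine IsExtrFilter.comp_tendsto ?_
      (tendsto_exp_smul_mul_nhdsWithin_specialOrthogonalGroup hS hR)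
    rwa [hcurve]
  simp only [Function.comp_def, Matrix.mul_assoc] at hextr
  exact hextr.hasDerivAt_eq_zero (hasDerivAt_trace_exp_smul_mul S (R * A))

end TraceExtremum

theorem coe_specialOrthogonalGroup_fin (m : ℕ) :
    (specialOrthogonalGroup (Fin m) ℝ : Set (Matrix (Fin m) (Fin m) ℝ)) = SOset m :=
  Set.ext fun _ => mem_specialOrthogonalGroup_iff.trans <|
    and_congr_left fun _ => mem_orthogonalGroup_iff' (Fin m) ℝ

theorem stmt2_general (n k : Type*) [Fintype n] [DecidableEq n] [Fintype k] :
    (∀ A : Matrix n n ℝ, ∃ R ∈ specialOrthogonalGroup n ℝ,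
      IsMaxOn (fun Q => (Q * A).trace) (specialOrthogonalGroup n ℝ : Set (Matrix n n ℝ)) R) ∧
    (∀ A : Matrix n n ℝ, ∀ R ∈ specialOrthogonalGroup n ℝ,
      IsLocalExtrOn (fun Q => (Q * A).trace) (specialOrthogonalGroup n ℝ) R → (R * A).IsSymm) ∧
    (∀ x y : Matrix n k ℝ, ∃ R ∈ specialOrthogonalGroup n ℝ, (R * y * xᵀ).IsSymm ∧
      IsMaxOn (fun Q => (x * (Q * y)ᵀ).trace)
        (specialOrthogonalGroup n ℝ : Set (Matrix n n ℝ)) R) := by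
  refine ⟨exists_isMaxOn_trace_mul, fun A R => isSymm_mul_of_isLocalExtrOn_trace_mul,
    fun x y => ?_⟩
  obtain ⟨R, hR, hmax⟩ := exists_isMaxOn_trace_mul (y * xᵀ)
  simp only [trace_mul_transpose_mul, Matrix.mul_assoc]
  exact ⟨R, hR, isSymm_mul_of_isLocalExtrOn_trace_mul hR hmax.localize.isExtr, hmax⟩

theorem stmt2 (m k : ℕ) :
    (∀ A : Matrix (Fin m) (Fin m) ℝ,
      ∃ R ∈ SOset m, ∀ Q ∈ SOset m, (Q * A).trace ≤ (R * A).trace) ∧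
    (∀ A R : Matrix (Fin m) (Fin m) ℝ, R ∈ SOset m →
      (∀ Q ∈ SOset m, (Q * A).trace ≤ (R * A).trace) → (R * A).IsSymm) ∧
    (∀ x y : Matrix (Fin m) (Fin k) ℝ, isPreShape x → isPreShape y →
      ∃ R ∈ SOset m, ((R * y) * xᵀ).IsSymm ∧
        ∀ Q ∈ SOset m, Real.arccos (fip x (R * y)) ≤ Real.arccos (fip x (Q * y))) := by
  simp only [← coe_specialOrthogonalGroup_fin]
  obtain ⟨hexists, hsymm, hwell⟩ := stmt2_general (Fin m) (Fin k)
  exact ⟨hexists, fun A R hR h => hsymm A R hR (isMaxOn_iff.2 h).localize.isExtr,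
    fun x y _ _ => (hwell x y).imp fun R ⟨hR, hRsymm, hRmax⟩ =>
      ⟨hR, hRsymm, fun Q hQ => Real.arccos_le_arccos (hRmax hQ)⟩⟩

end
end

section
/- Let x, y be pre-shapes in S^k_m that are well positioned, i.e. y xᵀ is symmetric and φ := arccos⟨x,y⟩ = min over R ∈ SO(m) of arccos⟨x, Ry⟩, with φ ∈ (0,π). Then for all 0 ≤ s ≤ t ≤ 1, min over R ∈ SO(m) of arccos⟨Φ(x,y,s), R Φ(x,y,t)⟩ = (t − s) · φ. In particular the horizontal geodesic Φ(x,y,·) projects to a shortest path of length φ in Kendall's shape space between the shapes of x and y. -/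
/-!
Rotations preserve the great-circle distance `arccos ⟪x, y⟫`, and slerp has constant speed `φ` for
it. If some rotation `R` brought `Φ t` within less than `(t - s) φ` of `Φ s`, then the path
`x`, `Φ s`, `R Φ t`, `R y` would join `x` to a rotated copy of `y` in length less than
`s φ + (t - s) φ + (1 - t) φ = φ`, against the optimal alignment of `x` and `y`.
-/

open Real Matrix

noncomputable section

section UnitSphere

open scoped RealInnerProductSpace

theorem sin_sub_mul_sin_sub_add_cos_mul (φ a b : ℝ) :
    sin (φ - a) * sin (φ - b) + (sin (φ - a) * sin b + sin a * sin (φ - b)) * cos φ +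
      sin a * sin b = sin φ ^ 2 * cos (b - a) := by
  rw [sin_sub, sin_sub, cos_sub]
  linear_combination -sin a * sin b * sin_sq_add_cos_sq φ

variable {E : Type*} [NormedAddCommGroup E] [InnerProductSpace ℝ E] {x y z : E} {s t : ℝ}

theorem arccos_inner_eq_angle (hx : ‖x‖ = 1) (hy : ‖y‖ = 1) :
    arccos ⟪x, y⟫ = InnerProductGeometry.angle x y := by
  rw [InnerProductGeometry.angle, hx, hy, mul_one, div_one]

theorem arccos_inner_le_add (hx : ‖x‖ = 1) (hy : ‖y‖ = 1) (hz : ‖z‖ = 1) :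
    arccos ⟪x, z⟫ ≤ arccos ⟪x, y⟫ + arccos ⟪y, z⟫ := by
  simpa only [arccos_inner_eq_angle, hx, hy, hz] using
    InnerProductGeometry.angle_le_angle_add_angle x y z

/-- Spherical linear interpolation between unit vectors of a real inner product space. It is the
zero map when `⟪x, y⟫ = ±1`, through division by `sin (arccos ⟪x, y⟫) = 0`. -/
def slerp (x y : E) (t : ℝ) : E :=
  (sin ((1 - t) * arccos ⟪x, y⟫) / sin (arccos ⟪x, y⟫)) • x +
    (sin (t * arccos ⟪x, y⟫) / sin (arccos ⟪x, y⟫)) • y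

theorem slerp_zero (hsin : sin (arccos ⟪x, y⟫) ≠ 0) : slerp x y 0 = x := by
  simp [slerp, hsin]

theorem slerp_one (hsin : sin (arccos ⟪x, y⟫) ≠ 0) : slerp x y 1 = y := by
  simp [slerp, hsin]

theorem inner_slerp_slerp (hx : ‖x‖ = 1) (hy : ‖y‖ = 1) (hsin : sin (arccos ⟪x, y⟫) ≠ 0)
    (s t : ℝ) : ⟪slerp x y s, slerp x y t⟫ = cos ((t - s) * arccos ⟪x, y⟫) := by
  have hcos : cos (arccos ⟪x, y⟫) = ⟪x, y⟫ :=
    cos_arccos (neg_one_le_real_inner_of_norm_eq_one hx hy) (real_inner_le_one_of_norm_eq_one hx hy)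
  simp only [slerp, inner_add_left, inner_add_right, real_inner_smul_left, real_inner_smul_right,
    real_inner_self_eq_norm_sq, hx, hy, real_inner_comm x y, sub_mul, one_mul]
  generalize arccos ⟪x, y⟫ = φ at *
  rw [← hcos, ← mul_div_cancel_left₀ (cos (t * φ - s * φ)) (pow_ne_zero 2 hsin),
    ← sin_sub_mul_sin_sub_add_cos_mul]
  ring

theorem norm_slerp (hx : ‖x‖ = 1) (hy : ‖y‖ = 1) (hsin : sin (arccos ⟪x, y⟫) ≠ 0) (t : ℝ) :
    ‖slerp x y t‖ = 1 := by
  rw [norm_eq_sqrt_real_inner, inner_slerp_slerp hx hy hsin, sub_self, zero_mul, cos_zero,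
    sqrt_one]

theorem arccos_inner_slerp_slerp (hx : ‖x‖ = 1) (hy : ‖y‖ = 1)
    (hsin : sin (arccos ⟪x, y⟫) ≠ 0) (hst : s ≤ t) (hts : t - s ≤ 1) :
    arccos ⟪slerp x y s, slerp x y t⟫ = (t - s) * arccos ⟪x, y⟫ := by
  have hφ : 0 ≤ arccos ⟪x, y⟫ := arccos_nonneg _
  rw [inner_slerp_slerp hx hy hsin, arccos_cos (mul_nonneg (sub_nonneg.2 hst) hφ)]
  exact (mul_le_of_le_one_left hφ hts).trans (arccos_le_pi _)

theorem mul_arccos_inner_le_arccos_inner_slerp_map_slerp (hx : ‖x‖ = 1) (hy : ‖y‖ = 1)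
    (hsin : sin (arccos ⟪x, y⟫) ≠ 0) (f : E →ₗᵢ[ℝ] E) (hf : arccos ⟪x, y⟫ ≤ arccos ⟪x, f y⟫)
    (hs : s ∈ Set.Icc 0 1) (ht : t ∈ Set.Icc 0 1) :
    (t - s) * arccos ⟪x, y⟫ ≤ arccos ⟪slerp x y s, f (slerp x y t)⟫ := by
  have hslerp := norm_slerp hx hy hsin
  have hfy : ‖f y‖ = 1 := (f.norm_map y).trans hy
  have hfslerp : ‖f (slerp x y t)‖ = 1 := (f.norm_map _).trans (hslerp t)
  have hinit : arccos ⟪x, slerp x y s⟫ = s * arccos ⟪x, y⟫ := by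
    simpa only [slerp_zero hsin, sub_zero] using
      arccos_inner_slerp_slerp hx hy hsin hs.1 (by linarith [hs.2])
  have hfinal : arccos ⟪f (slerp x y t), f y⟫ = (1 - t) * arccos ⟪x, y⟫ := by
    simpa only [slerp_one hsin, f.inner_map_map] using
      arccos_inner_slerp_slerp hx hy hsin ht.2 (by linarith [ht.1])
  have hpath : arccos ⟪x, y⟫ ≤ s * arccos ⟪x, y⟫ + (arccos ⟪slerp x y s, f (slerp x y t)⟫ +
      (1 - t) * arccos ⟪x, y⟫) :=
    calc arccos ⟪x, y⟫ ≤ arccos ⟪x, f y⟫ := hf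
      _ ≤ arccos ⟪x, slerp x y s⟫ + arccos ⟪slerp x y s, f y⟫ :=
        arccos_inner_le_add hx (hslerp s) hfy
      _ ≤ arccos ⟪x, slerp x y s⟫ + (arccos ⟪slerp x y s, f (slerp x y t)⟫ +
            arccos ⟪f (slerp x y t), f y⟫) := by
        gcongr
        exact arccos_inner_le_add (hslerp s) hfslerp hfy
      _ = _ := by rw [hinit, hfinal]
  linarith

theorem stmt5_general (hx : ‖x‖ = 1) (hy : ‖y‖ = 1) (h0 : 0 < arccos ⟪x, y⟫)
    (hπ : arccos ⟪x, y⟫ < π) (S : Set (E →ₗᵢ[ℝ] E)) (hid : LinearIsometry.id ∈ S)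
    (hmin : ∀ f ∈ S, arccos ⟪x, y⟫ ≤ arccos ⟪x, f y⟫) (hs : 0 ≤ s) (hst : s ≤ t) (ht : t ≤ 1) :
    IsLeast {a | ∃ f ∈ S, a = arccos ⟪slerp x y s, f (slerp x y t)⟫}
      ((t - s) * arccos ⟪x, y⟫) := by
  have hsin : sin (arccos ⟪x, y⟫) ≠ 0 := (sin_pos_of_pos_of_lt_pi h0 hπ).ne'
  refine ⟨⟨LinearIsometry.id, hid, ?_⟩, ?_⟩
  · exact (arccos_inner_slerp_slerp hx hy hsin hst (by linarith)).symm
  · rintro _ ⟨f, hf, rfl⟩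
    exact mul_arccos_inner_le_arccos_inner_slerp_map_slerp hx hy hsin f (hmin f hf)
      ⟨hs, hst.trans ht⟩ ⟨hs.trans hst, ht⟩

end UnitSphere

attribute [local instance] Matrix.frobeniusNormedAddCommGroup Matrix.frobeniusNormedSpace

/-- The Frobenius inner product `fip`, as an inner product inducing Mathlib's Frobenius norm. -/
@[reducible]
def frobeniusInnerProductSpace (m k : ℕ) : InnerProductSpace ℝ (Matrix (Fin m) (Fin k) ℝ) where
  inner := fip
  norm_sq_eq_re_inner x := by
    have hnonneg : 0 ≤ ∑ i, ∑ j, x i j ^ 2 := by positivity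
    simp only [frobenius_norm_def, norm_eq_abs, rpow_two, sq_abs, ← sqrt_eq_rpow, sq_sqrt hnonneg]
    simp [fip, trace, mul_apply, ← sq]
  conj_inner_symm x y := by
    rw [conj_trivial, fip, ← trace_transpose, transpose_mul, transpose_transpose, fip]
  add_left x y z := by simp only [fip, Matrix.add_mul, trace_add]
  smul_left x y r := by simp only [fip, Matrix.smul_mul, trace_smul, conj_trivial, smul_eq_mul]

attribute [local instance] frobeniusInnerProductSpace

theorem inner_eq_fip {m k : ℕ} (x y : Matrix (Fin m) (Fin k) ℝ) : inner ℝ x y = fip x y := rfl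

theorem slerp_eq_mSlerp {m k : ℕ} (x y : Matrix (Fin m) (Fin k) ℝ) : slerp x y = mSlerp x y := rfl

theorem isPreShape.norm_eq_one {m k : ℕ} {x : Matrix (Fin m) (Fin k) ℝ} (hx : isPreShape x) :
    ‖x‖ = 1 :=
  (norm_eq_sqrt_real_inner x).trans hx.2

theorem fip_mul_mul {l m k : ℕ} {R : Matrix (Fin l) (Fin m) ℝ} (hR : Rᵀ * R = 1)
    (x y : Matrix (Fin m) (Fin k) ℝ) : fip (R * x) (R * y) = fip x y := by
  rw [fip, transpose_mul, Matrix.mul_assoc, trace_mul_comm, Matrix.mul_assoc, Matrix.mul_assoc,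
    hR, Matrix.mul_one, fip]

/-- The action of a rotation on configurations of `k` points in `ℝ^m`. -/
def rotationIsometry {m : ℕ} (k : ℕ) (R : SOset m) :
    Matrix (Fin m) (Fin k) ℝ →ₗᵢ[ℝ] Matrix (Fin m) (Fin k) ℝ :=
  (mulLeftLinearMap (Fin k) ℝ R.1).isometryOfInner (fip_mul_mul R.2.1)

theorem rotationIsometry_apply {m k : ℕ} (R : SOset m) (x : Matrix (Fin m) (Fin k) ℝ) :
    rotationIsometry k R x = R.1 * x := rfl

theorem id_mem_range_rotationIsometry {m k : ℕ} :
    LinearIsometry.id ∈ Set.range (rotationIsometry (m := m) k) :=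
  ⟨⟨1, by simp [SOset]⟩, LinearIsometry.ext Matrix.one_mul⟩

theorem stmt5 {m k : ℕ} (x y : Matrix (Fin m) (Fin k) ℝ)
    (hx : isPreShape x) (hy : isPreShape y)
    (hsym : (y * xᵀ).IsSymm)
    (hmin : ∀ R ∈ SOset m, Real.arccos (fip x y) ≤ Real.arccos (fip x (R * y)))
    (hφ0 : 0 < Real.arccos (fip x y)) (hφπ : Real.arccos (fip x y) < Real.pi) :
    ∀ s t : ℝ, 0 ≤ s → s ≤ t → t ≤ 1 →
      IsLeast {a : ℝ | ∃ R ∈ SOset m,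
          a = Real.arccos (fip (mSlerp x y s) (R * mSlerp x y t))}
        ((t - s) * Real.arccos (fip x y)) := by
  intro s t hs hst ht
  simpa only [Set.exists_range_iff, rotationIsometry_apply, Subtype.exists, exists_prop,
    inner_eq_fip, slerp_eq_mSlerp] using
    stmt5_general hx.norm_eq_one hy.norm_eq_one hφ0 hφπ (Set.range (rotationIsometry k))
      id_mem_range_rotationIsometry (Set.forall_mem_range.2 fun R => hmin R R.2) hs hst ht

end
end
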